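/- Let F be a field of characteristic 2, let q ≅ q_r ⊥ q_s be a quadratic form over F with q_r nonsingular and q_s ≅ ⟨a₁,…,aₙ⟩ totally singular with not all aᵢ = 0, and let K/F be any field extension. Then there exist indices 1 ≤ i₁ < i₂ < … < i_r ≤ n such that, setting q_s' := ⟨a_{i₁},…,a_{i_r}⟩, one has ((q_s)_K)_an ≅ (q_s')_K and (q_K)_an ≅ φ ⊥ (q_s')_K for some nonsingular quadratic form φ over K. In particular, every field extension is excellent for totally singular quadratic forms. -/

import Mathlib

/-!  A concrete coefficient-matrix model of (possibly singular) finite-dimensional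
quadratic forms over a field, suitable for characteristic 2. -/

/-- Coefficient representation of a (finite-dimensional) quadratic form over a field `F`:
the form of dimension `dim` given by `q(x) = ∑ i j, c i j * x i * x j`. -/
structure QF (F : Type*) [Field F] : Type _ where
  dim : ℕ
  c : Matrix (Fin dim) (Fin dim) F

namespace QF

variable {F E : Type*} [Field F] [Field E]

/-- Evaluation of the quadratic form at a vector. -/
def eval (q : QF F) (x : Fin q.dim → F) : F :=
  ∑ i, ∑ j, q.c i j * x i * x j

/-- Scalar extension (base change) of a quadratic form along a ring homomorphism. -/
def map (f : F →+* E) (q : QF F) : QF E :=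
  ⟨q.dim, fun i j => f (q.c i j)⟩

/-- Orthogonal sum. -/
def orthSum (q q' : QF F) : QF F :=
  ⟨q.dim + q'.dim,
    Matrix.reindex finSumFinEquiv finSumFinEquiv (Matrix.fromBlocks q.c 0 0 q'.c)⟩

/-- Scaling `a • q`. -/
def smul (a : F) (q : QF F) : QF F := ⟨q.dim, a • q.c⟩

/-- The nonsingular binary quadratic form `[a,b] : (x,y) ↦ ax² + xy + by²`. -/
def bin (a b : F) : QF F := ⟨2, !![a, 1; 0, b]⟩

/-- The diagonal (totally singular) quadratic form `⟨a₁, …, aₙ⟩`. -/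
def diag {n : ℕ} (v : Fin n → F) : QF F := ⟨n, Matrix.diagonal v⟩

/-- The zero-dimensional quadratic form. -/
def nil : QF F := { dim := 0, c := 0 }

/-- The one-dimensional form `⟨1⟩`. -/
def unit : QF F := diag (fun _ : Fin 1 => (1 : F))

/-- Orthogonal sum of a list of forms. -/
def sumList (l : List (QF F)) : QF F := l.foldr orthSum nil

/-- `pfTensor [a₁,…,aₙ] q` is the tensor product `⟨⟨a₁,…,aₙ⟩⟩_b ⊗ q` of the bilinear
Pfister form `⟨⟨a₁,…,aₙ⟩⟩_b = ⟨1,a₁⟩_b ⊗ ⋯ ⊗ ⟨1,aₙ⟩_b` with the quadratic form `q`,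
via `⟨1,a⟩_b ⊗ q ≅ q ⊥ a·q`. -/
def pfTensor (l : List F) (q : QF F) : QF F :=
  l.foldr (fun a r => orthSum r (smul a r)) q

/-- The hyperbolic plane `ℍ ≅ [0,0]`. -/
def hypPlane : QF F := bin 0 0

/-- The orthogonal sum of `k` hyperbolic planes. -/
def hyp (k : ℕ) : QF F := sumList (List.replicate k hypPlane)

/-- The `l`-dimensional zero form `⟨0,…,0⟩`. -/
def zeros (l : ℕ) : QF F := diag (fun _ : Fin l => (0 : F))

/-- Isometry of quadratic forms. -/
def Isometric (q q' : QF F) : Prop :=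
  ∃ e : (Fin q.dim → F) ≃ₗ[F] (Fin q'.dim → F), ∀ x, q'.eval (e x) = q.eval x

/-- Anisotropy: the form has no nontrivial zero. -/
def Anisotropic (q : QF F) : Prop := ∀ x, q.eval x = 0 → x = 0

/-- A quadratic form is nonsingular if the radical of its polar form
`B_q(x,y) = q(x+y) - q(x) - q(y)` (with matrix `c + cᵀ`) is trivial. -/
def Nonsingular (q : QF F) : Prop := ∀ x, (q.c + q.c.transpose).mulVec x = 0 → x = 0

/-- A quadratic form is totally singular if its polar form vanishes identically. -/
def TotallySingular (q : QF F) : Prop := q.c + q.c.transpose = 0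

/-- A quadratic form is hyperbolic if it is isometric to an orthogonal sum of
hyperbolic planes. -/
def Hyperbolic (q : QF F) : Prop := ∃ k, Isometric q (hyp k)

/-- Witt equivalence: `q ~ q'` iff the anisotropic parts agree, equivalently the two
forms become isometric after adding suitable numbers of hyperbolic planes and zero
forms. -/
def WittEquiv (q q' : QF F) : Prop :=
  ∃ k k' l l', Isometric (orthSum q (orthSum (hyp k) (zeros l)))
    (orthSum q' (orthSum (hyp k') (zeros l')))

/-- `AnisoPartOf φ q` : `φ` is (isometric to) the anisotropic part of `q`, i.e. `φ` is
anisotropic and `q ≅ k × ℍ ⊥ φ ⊥ ⟨0,…,0⟩`. -/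
def AnisoPartOf (φ q : QF F) : Prop :=
  Anisotropic φ ∧ ∃ k l, Isometric q (orthSum (hyp k) (orthSum φ (zeros l)))

/-- `Dominates q' q` means `q ≺ q'`, i.e. `q'` dominates `q`: there is an injective
linear map `t` of the underlying spaces with `q' ∘ t = q`. -/
def Dominates (q' q : QF F) : Prop :=
  ∃ t : (Fin q.dim → F) →ₗ[F] (Fin q'.dim → F), Function.Injective t ∧
    ∀ x, q'.eval (t x) = q.eval x

/-- The affine quadric polynomial `∑ cᵢⱼ XᵢXⱼ` of a quadratic form. -/
noncomputable def toPoly (q : QF F) : MvPolynomial (Fin q.dim) F :=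
  ∑ i, ∑ j, MvPolynomial.C (q.c i j) * (MvPolynomial.X i * MvPolynomial.X j)

/-- The affine coordinate ring of the (reduced) quadric `q = 0`. -/
abbrev CoordRing (q : QF F) : Type _ :=
  MvPolynomial (Fin q.dim) F ⧸ (Ideal.span {q.toPoly}).radical

/-- The function field of the quadric `q = 0` (assuming the quadric is integral). -/
abbrev FunctionField (q : QF F) [IsDomain (CoordRing q)] : Type _ :=
  FractionRing (CoordRing q)

/-- The canonical ring homomorphism from a base field `F` into the function field of a
quadric defined over an extension field `K` of `F`. -/
noncomputable def toFunctionField {K : Type*} [Field K] [Algebra F K] (q : QF K)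
    [IsDomain (CoordRing q)] : F →+* FunctionField q :=
  (algebraMap (CoordRing q) (FunctionField q)).comp
    ((algebraMap K (CoordRing q)).comp (algebraMap F K))

end QF

/-!
The zeros over `K` of the totally singular form `⟨a₁, …, aₙ⟩` form a subspace, its radical. By
Steinitz exchange some standard basis vectors `e_{i₁}, …, e_{i_r}` span a complement of it, and
there the form is `D = ⟨a_{i₁}, …, a_{i_r}⟩`, which is anisotropic.

It remains to split hyperbolic planes off `q ⊥ D`, for `q` nonsingular, without changing `D`. If
`(v, w)` is an isotropic vector, then `v ≠ 0` because `D` is anisotropic; choose a functional `ℓ`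
with `ℓ v = 1`. As `D` is additive, the shear `(x, y) ↦ (x, y + ℓ x • w)` identifies `q ⊥ D` with
`(q + D w • ℓ²) ⊥ D`. In characteristic two the form `q + D w • ℓ²` has the same polar form as `q`,
and it vanishes at `v`, since `q v + D w = 0`; so it splits off a hyperbolic plane, and one
concludes by induction on the dimension of `q`.
-/

section LinearAlgebra

open Submodule

theorem exists_linearIndepOn_isCompl_span_image {ι K V : Type*} [DivisionRing K] [AddCommGroup V]
    [Module K V] {v : ι → V} (hv : span K (Set.range v) = ⊤) (N : Submodule K V) :
    ∃ s : Set ι, LinearIndepOn K v s ∧ IsCompl (span K (v '' s)) N := by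
  obtain ⟨s, -, -, hspan, hli⟩ := exists_linearIndepOn_extension
    (linearIndepOn_empty K (N.mkQ ∘ v)) (Set.empty_subset Set.univ)
  refine ⟨s, hli.of_comp, ?_, ?_⟩
  · simpa [Set.image_eq_range] using range_ker_disjoint hli
  · rw [codisjoint_comm, codisjoint_iff, ← map_mkQ_eq_top, map_span, ← Set.image_comp, eq_top_iff]
    rw [Set.image_univ, ← span_le, Set.range_comp, ← map_span, hv, Submodule.map_top,
      range_mkQ] at hspan
    exact hspan

theorem exists_strictMono_range_eq {α : Type*} [LinearOrder α] {s : Set α} (hs : s.Finite) :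
    ∃ (r : ℕ) (f : Fin r → α), StrictMono f ∧ Set.range f = s :=
  ⟨_, hs.toFinset.orderEmbOfFin rfl, (hs.toFinset.orderEmbOfFin rfl).strictMono, by simp⟩

end LinearAlgebra

section QuadraticMap

open QuadraticMap Submodule

variable {R M M' P ι : Type*} [CommRing R] [AddCommGroup M] [Module R M] [AddCommGroup M']
  [Module R M'] [AddCommGroup P] [Module R P]

theorem separatingLeft_polarBilin_of_equivalent {q : QuadraticMap R M P} {q' : QuadraticMap R M' P}
    (h : q.Equivalent q') (hq : q.polarBilin.SeparatingLeft) : q'.polarBilin.SeparatingLeft := by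
  obtain ⟨e⟩ := h
  intro x hx
  rw [← e.apply_symm_apply x, hq (e.symm x), map_zero]
  intro y
  have hxy := hx (e y)
  rwa [polarBilin_apply_apply, polar, ← e.apply_symm_apply x, ← map_add, e.map_app, e.map_app,
    e.map_app] at hxy

theorem separatingLeft_polarBilin_of_prod_right {q : QuadraticMap R M P}
    {q' : QuadraticMap R M' P} (h : (q.prod q').polarBilin.SeparatingLeft) :
    q'.polarBilin.SeparatingLeft := by
  intro x hx
  have hx0 : ((0 : M), x) = 0 := h (0, x) fun y ↦ by simpa using hx y.2
  exact congrArg Prod.snd hx0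

theorem anisotropic_of_equivalent {q : QuadraticMap R M P} {q' : QuadraticMap R M' P}
    (h : q.Equivalent q') (hq : q.Anisotropic) : q'.Anisotropic := by
  obtain ⟨e⟩ := h
  intro x hx
  rw [← e.apply_symm_apply x, hq (e.symm x) (by rw [e.symm.map_app, hx]), map_zero]

theorem equivalent_restrict_prod_zero {q : QuadraticMap R M P} {C N : Submodule R M}
    (h : IsCompl C N) (hN : N ≤ q.radical) :
    q.Equivalent ((q.restrict C).prod (0 : QuadraticMap R N P)) := by
  refine .symm ⟨⟨prodEquivOfIsCompl C N h, fun ⟨c, x⟩ ↦ ?_⟩⟩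
  simpa [add_comm] using (mem_radical_iff'.1 (hN x.2)).2 c

theorem anisotropic_restrict_of_disjoint_radical {q : QuadraticMap R M P} (hq : q.polarBilin = 0)
    {C : Submodule R M} (hC : Disjoint C q.radical) : (q.restrict C).Anisotropic :=
  fun x hx ↦ Subtype.ext (disjoint_def.1 hC x x.2 ⟨hx, by simp [hq]⟩)

theorem map_add_of_polarBilin_eq_zero {q : QuadraticMap R M P} (hq : q.polarBilin = 0)
    (x y : M) : q (x + y) = q x + q y := by
  rw [QuadraticMap.map_add q, ← polarBilin_apply_apply, hq, LinearMap.zero_apply,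
    LinearMap.zero_apply, add_zero]

theorem basisRepr_eq_weightedSumSquares_of_polarBilin_eq_zero [Fintype ι] {q : QuadraticForm R M}
    (hq : q.polarBilin = 0) (v : Module.Basis ι R M) :
    q.basisRepr v = weightedSumSquares R (q ∘ v) := by
  let qHom : M →+ R := ⟨⟨q, q.map_zero⟩, map_add_of_polarBilin_eq_zero hq⟩
  ext w
  rw [basisRepr_apply, weightedSumSquares_apply]
  refine (map_sum qHom _ _).trans (Finset.sum_congr rfl fun i _ ↦ ?_)
  exact (q.map_smul _ _).trans (mul_comm _ _)

theorem polarBilin_weightedSumSquares_eq_zero [CharP R 2] [Fintype ι] (w : ι → R) :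
    (weightedSumSquares R w).polarBilin = 0 := by
  refine LinearMap.ext₂ fun x y ↦ ?_
  simp only [polarBilin_apply_apply, polar, weightedSumSquares_apply, Pi.add_apply,
    CharTwo.add_mul_self, smul_add, Finset.sum_add_distrib]
  simp

theorem prod_equivalent_add_smul_linMulLin_prod (q : QuadraticForm R M) {D : QuadraticForm R M'}
    (hD : D.polarBilin = 0) (ℓ : Module.Dual R M) (w : M') :
    (q.prod D).Equivalent ((q + D w • linMulLin ℓ ℓ).prod D) := by
  let shear : (M × M') ≃ₗ[R] M × M' :=
    (LinearEquiv.refl R M).skewProd (LinearEquiv.refl R M') (ℓ.smulRight w)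
  refine .symm ⟨⟨shear, fun ⟨x, y⟩ ↦ ?_⟩⟩
  change q x + D (y + ℓ x • w) = q x + D w * (ℓ x * ℓ x) + D y
  rw [map_add_of_polarBilin_eq_zero hD, QuadraticMap.map_smul, smul_eq_mul]
  ring

theorem polarBilin_add_smul_linMulLin (q : QuadraticForm R M) {D : QuadraticForm R M'}
    (hD : D.polarBilin = 0) (ℓ : Module.Dual R M) (w : M') :
    (q + D w • linMulLin ℓ ℓ).polarBilin = q.polarBilin := by
  have hw : 2 * D w = 0 := by
    rw [← smul_eq_mul, ofNat_smul_eq_nsmul, ← polar_self, ← polarBilin_apply_apply, hD,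
      LinearMap.zero_apply, LinearMap.zero_apply]
  ext x y
  have hpolar : polar (linMulLin ℓ ℓ) x y = 2 * (ℓ x * ℓ y) := by
    simp only [polar, linMulLin_apply, map_add]
    ring
  rw [polarBilin_apply_apply, polarBilin_apply_apply, FunLike.coe_add, FunLike.coe_smul, polar_add,
    polar_smul, hpolar, smul_eq_mul]
  linear_combination (ℓ x * ℓ y) * hw

theorem equivalent_linMulLin_proj_prod_restrict (q : QuadraticForm R M) {v u : M}
    (hv : q v = 0) (hu : q u = 0) (hvu : polar q v u = 1) :
    q.Equivalent
      ((linMulLin (LinearMap.proj 0) (LinearMap.proj 1) : QuadraticForm R (Fin 2 → R)).prod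
        (q.restrict ((q.polarBilin v).ker ⊓ (q.polarBilin u).ker))) := by
  have huv : polar q u v = 1 := by rw [polar_comm, hvu]
  let C := (q.polarBilin v).ker ⊓ (q.polarBilin u).ker
  have hvC (x : C) : polar q v x = 0 := x.2.1
  have huC (x : C) : polar q u x = 0 := x.2.2
  have hproj (y : M) : y - (polar q u y • v + polar q v y • u) ∈ C := by
    simp [C, hv, hu, hvu, huv]
  let e : ((Fin 2 → R) × C) ≃ₗ[R] M :=
    { toFun := fun p ↦ p.1 0 • v + p.1 1 • u + p.2
      map_add' := fun p p' ↦ by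
        simp only [Prod.fst_add, Prod.snd_add, Pi.add_apply, coe_add]
        module
      map_smul' := fun c p ↦ by
        simp only [Prod.smul_fst, Prod.smul_snd, Pi.smul_apply, coe_smul, smul_eq_mul,
          RingHom.id_apply]
        module
      invFun := fun y ↦ (![polar q u y, polar q v y], ⟨_, hproj y⟩)
      left_inv := fun ⟨s, x⟩ ↦ by
        ext i
        · fin_cases i <;> simp [hv, hu, hvu, huv, hvC, huC]
        · simp [hv, hu, hvu, huv, hvC, huC]
      right_inv := fun y ↦ by simp }
  refine .symm ⟨⟨e, fun ⟨s, x⟩ ↦ ?_⟩⟩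
  change q (s 0 • v + s 1 • u + x) = s 0 * s 1 + q x
  rw [QuadraticMap.map_add q, QuadraticMap.map_add q]
  simp [QuadraticMap.map_smul, hv, hu, hvu, hvC, huC, mul_comm]

theorem map_sub_smul_eq_zero_of_polar_eq_one {q : QuadraticForm R M} {v u : M} (hv : q v = 0)
    (hvu : polar q v u = 1) : q (u - q u • v) = 0 := by
  rw [sub_eq_add_neg, ← neg_smul, QuadraticMap.map_add q, QuadraticMap.map_smul, polar_smul_right,
    polar_comm, hvu, hv]
  simp

end QuadraticMap

section Field

open QuadraticMap Submodule

variable {K V : Type*} [Field K] [AddCommGroup V] [Module K V]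

theorem exists_equivalent_linMulLin_proj_prod_restrict {q : QuadraticForm K V}
    (hq : q.polarBilin.SeparatingLeft) {v : V} (hv : q v = 0) (hv0 : v ≠ 0) :
    ∃ C : Submodule K V, q.Equivalent
      ((linMulLin (LinearMap.proj 0) (LinearMap.proj 1) : QuadraticForm K (Fin 2 → K)).prod
        (q.restrict C)) := by
  obtain ⟨u, hu⟩ : ∃ u, polar q v u ≠ 0 := by
    by_contra! h
    exact hv0 (hq v h)
  have hvu : polar q v ((polar q v u)⁻¹ • u) = 1 := by
    rw [polar_smul_right, smul_eq_mul, inv_mul_cancel₀ hu]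
  set u' := (polar q v u)⁻¹ • u
  refine ⟨_, equivalent_linMulLin_proj_prod_restrict q hv
    (map_sub_smul_eq_zero_of_polar_eq_one hv hvu) ?_⟩
  simp [hvu, hv]

theorem exists_not_anisotropic_prod_equivalent {W : Type*} [AddCommGroup W] [Module K W]
    {q : QuadraticForm K V} {D : QuadraticForm K W} (hD : D.polarBilin = 0)
    (haniso : D.Anisotropic) (hiso : ¬(q.prod D).Anisotropic) :
    ∃ q' : QuadraticForm K V, q'.polarBilin = q.polarBilin ∧ ¬q'.Anisotropic ∧
      (q.prod D).Equivalent (q'.prod D) := by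
  obtain ⟨⟨v, w⟩, hne, hvw⟩ := (not_anisotropic_iff_exists _).1 hiso
  rw [prod_apply] at hvw
  have hv : v ≠ 0 := by
    rintro rfl
    exact hne (by rw [haniso w (by simpa using hvw)]; rfl)
  obtain ⟨ℓ, hℓ⟩ : ∃ ℓ : Module.Dual K V, ℓ v ≠ 0 := by
    simpa using (Module.forall_dual_apply_eq_zero_iff K v).not.2 hv
  refine ⟨q + D w • linMulLin ((ℓ v)⁻¹ • ℓ) ((ℓ v)⁻¹ • ℓ),
    polarBilin_add_smul_linMulLin q hD _ w, fun h ↦ hv (h v ?_),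
    prod_equivalent_add_smul_linMulLin_prod q hD _ w⟩
  simp [hℓ, hvw]

theorem exists_strictMono_equivalent_weightedSumSquares_prod_zero {q : QuadraticForm K V}
    (hq : q.polarBilin = 0) {n : ℕ} (v : Module.Basis (Fin n) K V) :
    ∃ (r : ℕ) (f : Fin r → Fin n) (l : ℕ), StrictMono f ∧
      (weightedSumSquares K (q ∘ v ∘ f)).Anisotropic ∧
      q.Equivalent ((weightedSumSquares K (q ∘ v ∘ f)).prod (0 : QuadraticForm K (Fin l → K))) := by
  obtain ⟨s, hli, hcompl⟩ := exists_linearIndepOn_isCompl_span_image v.span_eq q.radical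
  obtain ⟨r, f, hf, rfl⟩ := exists_strictMono_range_eq s.toFinite
  rw [← Set.range_comp] at hcompl
  let w := Module.Basis.span ((linearIndepOn_range_iff hf.injective v).1 hli)
  have : Module.Finite K V := .of_basis v
  have hcoord : (q.restrict (span K (Set.range (v ∘ f)))).Equivalent
      (weightedSumSquares K (q ∘ v ∘ f)) := by
    have hpolar : (q.restrict (span K (Set.range (v ∘ f)))).polarBilin = 0 := by
      ext x y
      exact congrArg (fun B ↦ B x.1 y.1) hq
    have hrepr := basisRepr_eq_weightedSumSquares_of_polarBilin_eq_zero hpolar w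
    have hweights : q.restrict (span K (Set.range (v ∘ f))) ∘ w = q ∘ v ∘ f := by
      ext i
      simp [w, Module.Basis.span_apply]
    rw [← hweights, ← hrepr]
    exact ⟨isometryEquivBasisRepr _ w⟩
  refine ⟨r, f, Module.finrank K q.radical, hf, anisotropic_of_equivalent hcoord
    (anisotropic_restrict_of_disjoint_radical hq hcompl.disjoint), ?_⟩
  exact (equivalent_restrict_prod_zero hcompl le_rfl).trans
    (hcoord.prod ⟨⟨(Module.finBasis K q.radical).equivFun, fun _ ↦ rfl⟩⟩)

end Field

namespace QF

section ToQuadraticForm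

open QuadraticMap

variable {F K : Type*} [Field F] [Field K]

/-- The form `q` as a Mathlib `QuadraticForm` on coordinate vectors, giving access to isometry
equivalences, products and polar forms. -/
noncomputable def toQuadraticForm (q : QF K) : QuadraticForm K (Fin q.dim → K) :=
  q.c.toQuadraticForm'

theorem toQuadraticForm_apply (q : QF K) (x : Fin q.dim → K) :
    q.toQuadraticForm x = q.eval x := by
  simp only [toQuadraticForm, Matrix.toQuadraticForm', LinearMap.BilinMap.toQuadraticMap_apply,
    Matrix.toLinearMap₂'_apply, eval, smul_eq_mul]
  exact Finset.sum_congr rfl fun i _ ↦ Finset.sum_congr rfl fun j _ ↦ by ring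

theorem isometric_iff_equivalent {q q' : QF K} :
    q.Isometric q' ↔ q.toQuadraticForm.Equivalent q'.toQuadraticForm := by
  constructor
  · rintro ⟨e, he⟩
    exact ⟨⟨e, fun x ↦ by simpa [toQuadraticForm_apply] using he x⟩⟩
  · rintro ⟨e⟩
    exact ⟨e.toLinearEquiv, fun x ↦ by
      rw [← toQuadraticForm_apply, ← toQuadraticForm_apply]
      exact e.map_app x⟩

theorem anisotropic_iff {q : QF K} : q.Anisotropic ↔ q.toQuadraticForm.Anisotropic := by
  simp only [QF.Anisotropic, QuadraticMap.Anisotropic, toQuadraticForm_apply]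

theorem polarBilin_toQuadraticForm (q : QF K) :
    q.toQuadraticForm.polarBilin = Matrix.toLinearMap₂' K (q.c + q.c.transpose) := by
  ext i j
  simp [toQuadraticForm, Matrix.toQuadraticForm', LinearMap.BilinMap.polarBilin_toQuadraticMap,
    Matrix.toLinearMap₂'_apply']

theorem nonsingular_iff_det_ne_zero {q : QF K} :
    q.Nonsingular ↔ (q.c + q.c.transpose).det ≠ 0 := by
  rw [← not_iff_not, not_not, ← Matrix.exists_mulVec_eq_zero_iff]
  simp [QF.Nonsingular, and_comm]

theorem nonsingular_iff_separatingLeft {q : QF K} :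
    q.Nonsingular ↔ q.toQuadraticForm.polarBilin.SeparatingLeft := by
  rw [nonsingular_iff_det_ne_zero, polarBilin_toQuadraticForm,
    LinearMap.separatingLeft_toLinearMap₂'_iff_det_ne_zero]

theorem totallySingular_iff_polarBilin_eq_zero {q : QF K} :
    q.TotallySingular ↔ q.toQuadraticForm.polarBilin = 0 := by
  rw [polarBilin_toQuadraticForm, LinearEquiv.map_eq_zero_iff, QF.TotallySingular]

theorem Nonsingular.map {q : QF F} (hq : q.Nonsingular) (f : F →+* K) :
    (q.map f).Nonsingular := by
  rw [nonsingular_iff_det_ne_zero] at hq ⊢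
  have hmap : (q.map f).c + (q.map f).c.transpose = f.mapMatrix (q.c + q.c.transpose) := by
    ext i j
    exact (map_add f _ _).symm
  rw [hmap]
  exact (f.map_det _).symm.trans_ne ((map_ne_zero f).2 hq)

theorem map_diag (f : F →+* K) {n : ℕ} (b : Fin n → F) : (diag b).map f = diag (f ∘ b) :=
  congrArg (QF.mk n) (Matrix.diagonal_map (map_zero f))

theorem map_orthSum (f : F →+* K) (q q' : QF F) :
    (q.orthSum q').map f = (q.map f).orthSum (q'.map f) := by
  refine congrArg (QF.mk (q.dim + q'.dim)) ?_
  change (Matrix.reindex finSumFinEquiv finSumFinEquiv (Matrix.fromBlocks q.c 0 0 q'.c)).map f =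
    Matrix.reindex finSumFinEquiv finSumFinEquiv
      (Matrix.fromBlocks (q.c.map f) 0 0 (q'.c.map f))
  simp [← Matrix.submatrix_map, Matrix.fromBlocks_map]

theorem totallySingular_diag [CharP K 2] {n : ℕ} (b : Fin n → K) : (diag b).TotallySingular := by
  change Matrix.diagonal b + (Matrix.diagonal b).transpose = 0
  ext i j
  rw [Matrix.diagonal_transpose]
  exact CharTwo.add_self_eq_zero _

theorem eval_orthSum (q q' : QF K) (x : Fin (q.dim + q'.dim) → K) :
    (q.orthSum q').eval x =
      q.eval (fun i ↦ x (i.castAdd q'.dim)) + q'.eval (fun j ↦ x (j.natAdd q.dim)) := by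
  unfold eval orthSum
  simp only [Fin.sum_univ_add]
  simp

theorem toQuadraticForm_orthSum_equivalent (q q' : QF K) :
    (q.orthSum q').toQuadraticForm.Equivalent (q.toQuadraticForm.prod q'.toQuadraticForm) := by
  let e : (Fin (q.dim + q'.dim) → K) ≃ₗ[K] (Fin q.dim → K) × (Fin q'.dim → K) :=
    (LinearEquiv.funCongrLeft K K finSumFinEquiv).trans
      (LinearEquiv.sumArrowLequivProdArrow (Fin q.dim) (Fin q'.dim) K K)
  refine ⟨⟨e, fun x ↦ ?_⟩⟩
  change q.toQuadraticForm _ + q'.toQuadraticForm _ = (q.orthSum q').toQuadraticForm x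
  simp only [toQuadraticForm_apply]
  exact (eval_orthSum q q' x).symm

theorem eval_diag {n : ℕ} (b x : Fin n → K) : (diag b).eval x = ∑ i, b i * (x i * x i) := by
  change ∑ i, ∑ j, Matrix.diagonal b i j * x i * x j = _
  simp [Matrix.diagonal_apply, mul_assoc]

theorem toQuadraticForm_diag_equivalent {n : ℕ} (b : Fin n → K) :
    (diag b).toQuadraticForm.Equivalent (weightedSumSquares K b) := by
  refine ⟨⟨LinearEquiv.refl K (Fin n → K), fun x ↦ ?_⟩⟩
  exact (weightedSumSquares_apply b _).trans
    ((eval_diag b x).symm.trans (toQuadraticForm_apply (diag b) x).symm)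

theorem toQuadraticForm_zeros_equivalent (l : ℕ) :
    (zeros l : QF K).toQuadraticForm.Equivalent (0 : QuadraticForm K (Fin l → K)) := by
  have hzero : weightedSumSquares K (fun _ : Fin l ↦ (0 : K)) = 0 := by
    ext x
    simp [weightedSumSquares_apply]
  exact hzero ▸ toQuadraticForm_diag_equivalent _

theorem eval_hypPlane (x : Fin 2 → K) : hypPlane.eval x = x 0 * x 1 := by
  change ∑ i : Fin 2, ∑ j : Fin 2, !![(0 : K), 1; 0, 0] i j * x i * x j = _
  simp [Fin.sum_univ_two]

theorem toQuadraticForm_hypPlane_equivalent :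
    (hypPlane : QF K).toQuadraticForm.Equivalent
      (linMulLin (LinearMap.proj 0) (LinearMap.proj 1) : QuadraticForm K (Fin 2 → K)) :=
  ⟨⟨LinearEquiv.refl K (Fin 2 → K), fun x ↦
    (eval_hypPlane x).symm.trans (toQuadraticForm_apply hypPlane x).symm⟩⟩

theorem exists_equivalent_toQuadraticForm {V : Type*} [AddCommGroup V] [Module K V]
    [FiniteDimensional K V] (q : QuadraticForm K V) :
    ∃ q' : QF K, q.Equivalent q'.toQuadraticForm := by
  let b := Module.finBasis K V
  refine ⟨⟨Module.finrank K V, LinearMap.toMatrix₂ b b (q.toBilin b)⟩, ⟨⟨b.equivFun, fun x ↦ ?_⟩⟩⟩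
  let A := LinearMap.toMatrix₂ b b (q.toBilin b)
  calc A.toQuadraticForm' (b.equivFun x)
      = Matrix.toLinearMap₂' K A (b.equivFun x) (b.equivFun x) := rfl
    _ = b.equivFun x ⬝ᵥ A.mulVec (b.equivFun x) := Matrix.toLinearMap₂'_apply' A _ _
    _ = q.toBilin b x x := (apply_eq_dotProduct_toMatrix₂_mulVec b b (q.toBilin b) x x).symm
    _ = q x := DFunLike.congr_fun (q.toQuadraticMap_toBilin b) x

end ToQuadraticForm

section Isometric

open QuadraticMap

variable {K : Type*} [Field K] {q q' q₁ q₂ q₁' q₂' : QF K}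

namespace Isometric

protected theorem refl (q : QF K) : q.Isometric q := isometric_iff_equivalent.2 (.refl _)

protected theorem symm (h : q.Isometric q') : q'.Isometric q :=
  isometric_iff_equivalent.2 (isometric_iff_equivalent.1 h).symm

protected theorem trans (h : q.Isometric q₁) (h' : q₁.Isometric q₂) : q.Isometric q₂ :=
  isometric_iff_equivalent.2
    ((isometric_iff_equivalent.1 h).trans (isometric_iff_equivalent.1 h'))

theorem orthSum_congr (h₁ : q₁.Isometric q₁') (h₂ : q₂.Isometric q₂') :
    (q₁.orthSum q₂).Isometric (q₁'.orthSum q₂') :=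
  isometric_iff_equivalent.2 <| (toQuadraticForm_orthSum_equivalent q₁ q₂).trans <|
    ((isometric_iff_equivalent.1 h₁).prod (isometric_iff_equivalent.1 h₂)).trans
      (toQuadraticForm_orthSum_equivalent q₁' q₂').symm

theorem dim_eq (h : q.Isometric q') : q.dim = q'.dim := by
  obtain ⟨e, -⟩ := h
  simpa using e.finrank_eq

theorem nonsingular (h : q.Isometric q') (hq : q.Nonsingular) : q'.Nonsingular :=
  nonsingular_iff_separatingLeft.2 <|
    separatingLeft_polarBilin_of_equivalent (isometric_iff_equivalent.1 h)
      (nonsingular_iff_separatingLeft.1 hq)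

end Isometric

theorem orthSum_assoc_isometric (q q₁ q₂ : QF K) :
    ((q.orthSum q₁).orthSum q₂).Isometric (q.orthSum (q₁.orthSum q₂)) := by
  have hassoc : ((q.toQuadraticForm.prod q₁.toQuadraticForm).prod q₂.toQuadraticForm).Equivalent
      (q.toQuadraticForm.prod (q₁.toQuadraticForm.prod q₂.toQuadraticForm)) :=
    ⟨⟨LinearEquiv.prodAssoc K _ _ _, fun x ↦ (add_assoc _ _ _).symm⟩⟩
  refine isometric_iff_equivalent.2 <| (toQuadraticForm_orthSum_equivalent _ _).trans <|
    ((toQuadraticForm_orthSum_equivalent _ _).prod (.refl _)).trans <| hassoc.trans <|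
    (((Equivalent.refl _).prod (toQuadraticForm_orthSum_equivalent _ _).symm)).trans
      (toQuadraticForm_orthSum_equivalent _ _).symm

theorem nil_orthSum_isometric (q : QF K) : (nil.orthSum q).Isometric q := by
  have : Unique (Fin (nil : QF K).dim → K) := inferInstanceAs (Unique (Fin 0 → K))
  refine isometric_iff_equivalent.2 <| (toQuadraticForm_orthSum_equivalent _ _).trans
    ⟨⟨LinearEquiv.uniqueProd, fun ⟨z, x⟩ ↦ ?_⟩⟩
  rw [prod_apply, Subsingleton.elim z 0, QuadraticMap.map_zero, zero_add]
  rfl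

theorem Nonsingular.of_orthSum_right (h : (q.orthSum q').Nonsingular) : q'.Nonsingular :=
  nonsingular_iff_separatingLeft.2 <| separatingLeft_polarBilin_of_prod_right <|
    separatingLeft_polarBilin_of_equivalent (toQuadraticForm_orthSum_equivalent q q')
      (nonsingular_iff_separatingLeft.1 h)

end Isometric

section Witt

open QuadraticMap

variable {K : Type*} [Field K] {q D : QF K}

theorem exists_isometric_hypPlane_orthSum (hq : q.Nonsingular) (hiso : ¬q.Anisotropic) :
    ∃ q' : QF K, q'.Nonsingular ∧ q.Isometric (hypPlane.orthSum q') := by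
  obtain ⟨v, hv0, hv⟩ := (not_anisotropic_iff_exists _).1 (anisotropic_iff.not.1 hiso)
  obtain ⟨C, hC⟩ := exists_equivalent_linMulLin_proj_prod_restrict
    (nonsingular_iff_separatingLeft.1 hq) hv hv0
  obtain ⟨q', hq'⟩ := exists_equivalent_toQuadraticForm (q.toQuadraticForm.restrict C)
  have hiso' : q.Isometric (hypPlane.orthSum q') :=
    isometric_iff_equivalent.2 <| hC.trans <|
      (toQuadraticForm_hypPlane_equivalent.symm.prod hq').trans
        (toQuadraticForm_orthSum_equivalent _ _).symm
  exact ⟨q', (hiso'.nonsingular hq).of_orthSum_right, hiso'⟩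

theorem exists_not_anisotropic_orthSum_isometric (hq : q.Nonsingular) (hD : D.Anisotropic)
    (hDts : D.TotallySingular) (hiso : ¬(q.orthSum D).Anisotropic) :
    ∃ q' : QF K, q'.Nonsingular ∧ ¬q'.Anisotropic ∧
      (q.orthSum D).Isometric (q'.orthSum D) := by
  have hprod := toQuadraticForm_orthSum_equivalent q D
  obtain ⟨Q, hpolar, hQ, hQD⟩ := exists_not_anisotropic_prod_equivalent
    (totallySingular_iff_polarBilin_eq_zero.1 hDts) (anisotropic_iff.1 hD)
    (fun h ↦ hiso (anisotropic_iff.2 (anisotropic_of_equivalent hprod.symm h)))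
  obtain ⟨q', hq'⟩ := exists_equivalent_toQuadraticForm Q
  refine ⟨q', ?_, fun h ↦ hQ (anisotropic_of_equivalent hq'.symm (anisotropic_iff.1 h)),
    isometric_iff_equivalent.2 ?_⟩
  · rw [nonsingular_iff_separatingLeft] at hq ⊢
    exact separatingLeft_polarBilin_of_equivalent hq' (hpolar ▸ hq)
  · exact hprod.trans <| hQD.trans <|
      (hq'.prod (.refl _)).trans (toQuadraticForm_orthSum_equivalent q' D).symm

theorem exists_isometric_hyp_orthSum (hq : q.Nonsingular) (hD : D.Anisotropic)
    (hDts : D.TotallySingular) :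
    ∃ (φ : QF K) (k : ℕ), φ.Nonsingular ∧ (φ.orthSum D).Anisotropic ∧
      (q.orthSum D).Isometric ((hyp k).orthSum (φ.orthSum D)) := by
  induction hd : q.dim using Nat.strong_induction_on generalizing q with
  | _ d ih =>
  by_cases hiso : (q.orthSum D).Anisotropic
  · exact ⟨q, 0, hq, hiso, (nil_orthSum_isometric _).symm⟩
  obtain ⟨q₀, hq₀, hiso₀, h₀⟩ := exists_not_anisotropic_orthSum_isometric hq hD hDts hiso
  obtain ⟨q', hq', h'⟩ := exists_isometric_hypPlane_orthSum hq₀ hiso₀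
  have hdim : q'.dim < d := by
    have hsum : q.dim + D.dim = q₀.dim + D.dim := h₀.dim_eq
    have hplane : q₀.dim = 2 + q'.dim := h'.dim_eq
    lia
  obtain ⟨φ, k, hφ, haniso, h⟩ := ih q'.dim hdim hq' rfl
  refine ⟨φ, k + 1, hφ, haniso, ?_⟩
  exact h₀.trans <| (h'.orthSum_congr (.refl D)).trans <| (orthSum_assoc_isometric _ _ _).trans <|
    (Isometric.orthSum_congr (.refl hypPlane) h).trans (orthSum_assoc_isometric _ _ _).symm

end Witt

section AnisoPartOf

open QuadraticMap

variable {K : Type*} [Field K] {q D s : QF K}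

theorem anisoPartOf_of_isometric_orthSum_zeros {l : ℕ} (hD : D.Anisotropic)
    (h : s.Isometric (D.orthSum (zeros l))) : D.AnisoPartOf s :=
  ⟨hD, 0, l, h.trans (nil_orthSum_isometric _).symm⟩

theorem exists_nonsingular_anisoPartOf_orthSum {l : ℕ} (hq : q.Nonsingular) (hD : D.Anisotropic)
    (hDts : D.TotallySingular) (h : s.Isometric (D.orthSum (zeros l))) :
    ∃ φ : QF K, φ.Nonsingular ∧ (φ.orthSum D).AnisoPartOf (q.orthSum s) := by
  obtain ⟨φ, k, hφ, haniso, hφk⟩ := exists_isometric_hyp_orthSum hq hD hDts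
  refine ⟨φ, hφ, haniso, k, l, ?_⟩
  exact (Isometric.orthSum_congr (.refl q) h).trans <|
    (orthSum_assoc_isometric _ _ _).symm.trans <|
    (hφk.orthSum_congr (.refl (zeros l))).trans (orthSum_assoc_isometric _ _ _)

theorem exists_strictMono_diag_isometric [CharP K 2] {n : ℕ} (b : Fin n → K) :
    ∃ (r : ℕ) (f : Fin r → Fin n) (l : ℕ), StrictMono f ∧ (diag (b ∘ f)).Anisotropic ∧
      (diag b).Isometric ((diag (b ∘ f)).orthSum (zeros l)) := by
  obtain ⟨r, f, l, hf, haniso, h⟩ := exists_strictMono_equivalent_weightedSumSquares_prod_zero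
    (polarBilin_weightedSumSquares_eq_zero b) (Pi.basisFun K (Fin n))
  have hweights : weightedSumSquares K b ∘ Pi.basisFun K (Fin n) ∘ f = b ∘ f := by
    ext i
    simp [weightedSumSquares_apply, Pi.single_apply]
  rw [hweights] at haniso h
  have hdiag := toQuadraticForm_diag_equivalent (b ∘ f)
  refine ⟨r, f, l, hf, anisotropic_iff.2 (anisotropic_of_equivalent hdiag.symm haniso), ?_⟩
  exact isometric_iff_equivalent.2 <|
    (toQuadraticForm_diag_equivalent b).trans <| h.trans <|
    (hdiag.symm.prod (toQuadraticForm_zeros_equivalent l).symm).trans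
      (toQuadraticForm_orthSum_equivalent _ _).symm

theorem pos_of_diag_isometric_orthSum_zeros {n r l : ℕ} {b : Fin n → K} {w : Fin r → K}
    (hb : b ≠ 0) (h : (diag b).Isometric ((diag w).orthSum (zeros l))) : 0 < r := by
  obtain ⟨e, he⟩ := h
  refine Nat.pos_of_ne_zero fun hr ↦ hb (funext fun i ↦ ?_)
  subst hr
  let x : Fin n → K := Pi.single i 1
  calc b i = ∑ j, b j * (x j * x j) := by simp [x, Pi.single_apply]
    _ = (diag b).eval x := (eval_diag b x).symm
    _ = ((diag w).orthSum (zeros l)).eval (e x) := (he x).symm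
    _ = 0 := by
      refine (eval_orthSum _ _ _).trans ?_
      refine (congrArg₂ (· + ·) (eval_diag w _) (eval_diag _ _)).trans ?_
      simp

end AnisoPartOf

end QF

open QF in
/-- Let `q ≅ q_r ⊥ q_s` be a quadratic form over a field `F` of
characteristic 2 with `q_r` nonsingular and `q_s ≅ ⟨a₁,…,aₙ⟩` totally singular, not all
`aᵢ = 0`, and let `K/F` be any field extension.  Then there are `1 ≤ r` and indices
`i₁ < … < i_r` (given by a strictly monotone `f : Fin r → Fin n`) such that, with
`q_s' = ⟨a_{i₁},…,a_{i_r}⟩`, the form `(q_s')_K` is the anisotropic part of `(q_s)_K`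
and the anisotropic part of `q_K` is `φ ⊥ (q_s')_K` for some nonsingular form `φ`
over `K`.  In particular every field extension is excellent for totally singular
quadratic forms. -/
theorem totally_singular_excellence
    (F K : Type*) [Field F] [Field K] [Algebra F K] [CharP F 2]
    (qr : QF F) (hqr : qr.Nonsingular)
    (n : ℕ) (a : Fin n → F) (ha : ∃ i, a i ≠ 0) :
    ∃ (r : ℕ) (f : Fin r → Fin n), 1 ≤ r ∧ StrictMono f ∧
      AnisoPartOf ((diag (a ∘ f)).map (algebraMap F K)) ((diag a).map (algebraMap F K)) ∧
      ∃ φ : QF K, φ.Nonsingular ∧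
        AnisoPartOf (φ.orthSum ((diag (a ∘ f)).map (algebraMap F K)))
          ((qr.orthSum (diag a)).map (algebraMap F K)) := by
  have : CharP K 2 := charP_of_injective_algebraMap (algebraMap F K).injective 2
  have hqrK := hqr.map (algebraMap F K)
  have haK : algebraMap F K ∘ a ≠ 0 := by
    obtain ⟨i, hi⟩ := ha
    exact fun h ↦ hi ((map_eq_zero (algebraMap F K)).1 (congrFun h i))
  obtain ⟨r, f, l, hf, haniso, hdiag⟩ := exists_strictMono_diag_isometric (algebraMap F K ∘ a)
  simp only [map_orthSum, map_diag]
  exact ⟨r, f, pos_of_diag_isometric_orthSum_zeros haK hdiag, hf,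
    anisoPartOf_of_isometric_orthSum_zeros haniso hdiag,
    exists_nonsingular_anisoPartOf_orthSum hqrK haniso (totallySingular_diag _) hdiag⟩
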